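/- Let d ≥ 4 and let a_1,…,a_d ∈ F_q∖{0} be such that a_1+⋯+a_d = 0. Then there exists c_q < q such that for all sufficiently large n, every set A ⊆ F_q^n with |A| > c_q^n contains pairwise distinct elements x_1,…,x_d satisfying a_1x_1 + a_2x_2 + ⋯ + a_dx_d = 0. -/

import Mathlib

/-!
If `A ⊆ F_q ^ n` contains no solution of `b₀ x + b₁ y + b₂ z = 0` in distinct elements, where
`b₀ + b₁ + b₂ = 0` and the `b j` are nonzero, then its only solutions in `A` are the constant ones,
and Tao's slice rank method bounds `A` exponentially. More variables are treated by induction, by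
splitting the equation as `∑ i ∈ S, a i x i = s z` and `s z + ∑ i ∉ S, a i x i = 0`, where
`s = ∑ i ∈ S, a i`: if `A` has many disjoint solutions of the first equation, then the set of their
`z`-values contains a solution of the second one. A pair `S` with `s ≠ 0` will do unless all
coefficients are equal and `q` is even. In that case `S` is chosen to be a triple, and the remaining
equation `x₀ + x₁ + x₂ + x₃ = 0` has a solution in distinct elements of `A` as soon as two pairs in
`A` have the same sum.
-/

open Finset Module Filter

section SliceRank

variable {K B : Type*} [Field K] [Fintype B]

lemma exists_mem_finrank_le_card_support [DecidableEq K] (V : Submodule K (B → K)) :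
    ∃ u ∈ V, finrank K V ≤ #{x | u x ≠ 0} := by
  -- If the support of `u` is maximal, then `v = 0` for every `v ∈ V` vanishing on it, because
  -- `u + v` has support `supp u ∪ supp v`.
  obtain ⟨-, ⟨u, rfl⟩, hmax⟩ :=
    (Set.toFinite (Set.range fun u : V ↦ Function.support (u : B → K))).exists_maximal
      (Set.range_nonempty _)
  refine ⟨u, u.2, ?_⟩
  let restrict : V →ₗ[K] ({x // (u : B → K) x ≠ 0} → K) :=
    LinearMap.funLeft K K Subtype.val ∘ₗ V.subtype
  have restrict_injective : Function.Injective restrict := by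
    refine (injective_iff_map_eq_zero restrict).2 fun v hv ↦ ?_
    have v_eq_zero_of_ne : ∀ x, (u : B → K) x ≠ 0 → (v : B → K) x = 0 :=
      fun x hx ↦ congrFun hv ⟨x, hx⟩
    have support_le : Function.support (u : B → K) ≤ Function.support ((u + v : V) : B → K) :=
      fun x hx ↦ by simpa [v_eq_zero_of_ne x hx] using hx
    ext x
    by_contra hvx
    have hux : (u : B → K) x = 0 := not_imp_comm.1 (v_eq_zero_of_ne x) hvx
    exact hmax ⟨u + v, rfl⟩ support_le (by simpa [hux] using hvx) hux
  simpa [Fintype.card_subtype] using LinearMap.finrank_le_finrank_of_injective restrict_injective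

lemma exists_dotProduct_eq_zero_card_le [DecidableEq K] (U : Submodule K (B → K)) :
    ∃ t : B → K, (∀ u ∈ U, u ⬝ᵥ t = 0) ∧ Fintype.card B ≤ finrank K U + #{x | t x ≠ 0} := by
  classical
  let Φ := U.map (dotProductEquiv K B).toLinearMap
  obtain ⟨t, ht, hcard⟩ := exists_mem_finrank_le_card_support Φ.dualCoannihilator
  refine ⟨t, fun u hu ↦ (Submodule.mem_dualCoannihilator t).1 ht _ ⟨u, hu, rfl⟩, ?_⟩
  have hfinrank := Subspace.finrank_add_finrank_dualCoannihilator_eq Φ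
  rw [LinearEquiv.finrank_map_eq (dotProductEquiv K B), finrank_pi] at hfinrank
  omega

lemma matrix_rank_add_le {m n : Type*} [Finite m] [Fintype n] (M N : Matrix m n K) :
    (M + N).rank ≤ M.rank + N.rank := by
  rw [Matrix.rank, Matrix.mulVecLin_add]
  refine (Submodule.finrank_mono ?_).trans (Submodule.finrank_add_le_finrank_add_finrank _ _)
  rintro - ⟨x, rfl⟩
  exact Submodule.add_mem_sup ⟨x, rfl⟩ ⟨x, rfl⟩

lemma rank_le_finrank_of_col_mem {m n : Type*} [Finite m] [Fintype n] {M : Matrix m n K}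
    {V : Submodule K (m → K)} (h : ∀ j, M.col j ∈ V) : M.rank ≤ finrank K V := by
  rw [Matrix.rank_eq_finrank_span_cols]
  exact Submodule.finrank_mono (Submodule.span_le.2 (Set.range_subset_iff.2 h))

lemma rank_le_finrank_of_row_mem {m n : Type*} [Finite m] [Fintype n] {M : Matrix m n K}
    {W : Submodule K (n → K)} (h : ∀ i, M.row i ∈ W) : M.rank ≤ finrank K W := by
  rw [Matrix.rank_eq_finrank_span_row]
  exact Submodule.finrank_mono (Submodule.span_le.2 (Set.range_subset_iff.2 h))

/- Tao's slice rank bound: contracting the first variable with a vector of large support that is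
orthogonal to `U` leaves a diagonal matrix of large rank. -/
theorem card_le_finrank_add_of_sum_mul_eq_diagonal [DecidableEq B] {I : Type*} (S : Finset I)
    (U V W : Submodule K (B → K)) (u v w : I → B → K)
    (hS : ∀ i ∈ S, u i ∈ U ∨ v i ∈ V ∨ w i ∈ W)
    (hdiag : ∀ x y z, ∑ i ∈ S, u i x * v i y * w i z = if x = y ∧ y = z then 1 else 0) :
    Fintype.card B ≤ finrank K U + finrank K V + finrank K W := by
  classical
  obtain ⟨t, ht, hcard⟩ := exists_dotProduct_eq_zero_card_le U
  let contraction (S' : Finset I) : Matrix B B K :=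
    Matrix.of fun y z ↦ ∑ i ∈ S', u i ⬝ᵥ t * v i y * w i z
  have diagonal_eq : Matrix.diagonal t =
      contraction {i ∈ S | v i ∈ V} + contraction {i ∈ S | v i ∉ V} := by
    ext y z
    calc Matrix.diagonal t y z = ∑ x, t x * ∑ i ∈ S, u i x * v i y * w i z := by
          simp_rw [hdiag, Matrix.diagonal_apply]
          by_cases hyz : y = z <;> simp [hyz]
      _ = ∑ i ∈ S, u i ⬝ᵥ t * v i y * w i z := by
          simp_rw [mul_sum, dotProduct, sum_mul]
          rw [sum_comm]
          exact sum_congr rfl fun i _ ↦ sum_congr rfl fun x _ ↦ by ring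
      _ = _ := (sum_filter_add_sum_filter_not S (v · ∈ V) _).symm
  have rank_left : (contraction {i ∈ S | v i ∈ V}).rank ≤ finrank K V := by
    refine rank_le_finrank_of_col_mem fun z ↦ ?_
    have col_eq : (contraction {i ∈ S | v i ∈ V}).col z =
        ∑ i ∈ S with v i ∈ V, (u i ⬝ᵥ t * w i z) • v i := by
      ext y
      simp [contraction, mul_right_comm]
    rw [col_eq]
    exact sum_mem fun i hi ↦ V.smul_mem _ (mem_filter.1 hi).2
  have rank_right : (contraction {i ∈ S | v i ∉ V}).rank ≤ finrank K W := by
    refine rank_le_finrank_of_row_mem fun y ↦ ?_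
    have row_eq : (contraction {i ∈ S | v i ∉ V}).row y =
        ∑ i ∈ S with v i ∉ V, (u i ⬝ᵥ t * v i y) • w i := by
      ext z
      simp [contraction]
    rw [row_eq]
    refine sum_mem fun i hi ↦ ?_
    obtain ⟨hiS, hiV⟩ := mem_filter.1 hi
    rcases hS i hiS with hiU | hiV' | hiW
    · simp [ht _ hiU]
    · exact absurd hiV' hiV
    · exact W.smul_mem _ hiW
  have rank_diagonal : (Matrix.diagonal t).rank = #{x | t x ≠ 0} := by
    rw [Matrix.rank_diagonal, Fintype.card_subtype]
  have := diagonal_eq ▸ matrix_rank_add_le (contraction {i ∈ S | v i ∈ V}) (contraction _)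
  omega

end SliceRank

section LowDegreeExponents

lemma exists_sum_pow_lt_card_mul_pow {I : Type*} (s : Finset I) (e : I → ℕ) (d : ℕ)
    (h : #s * d < ∑ k ∈ s, e k) :
    ∃ w : ℝ, 0 < w ∧ w < 1 ∧ ∑ k ∈ s, w ^ e k < #s * w ^ d := by
  let f : ℝ → ℝ := fun w ↦ ∑ k ∈ s, w ^ e k - #s * w ^ d
  have hderiv : HasDerivAt f (∑ k ∈ s, (e k : ℝ) - #s * d) 1 := by
    have := (HasDerivAt.fun_sum fun k (_ : k ∈ s) ↦ hasDerivAt_pow (e k) (1 : ℝ)).sub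
      ((hasDerivAt_pow d (1 : ℝ)).const_mul (#s : ℝ))
    simp only [one_pow, mul_one] at this
    exact this
  have hderiv_pos : 0 < deriv f 1 := by
    rw [hderiv.deriv, sub_pos]
    exact_mod_cast h
  have hsign := eventually_nhdsWithin_sign_eq_of_deriv_pos hderiv_pos (by simp [f])
  obtain ⟨w, ⟨hw, hw0⟩, hw1 : w < 1⟩ := (((hsign.and (lt_mem_nhds one_pos)).filter_mono
    (nhdsWithin_le_nhds (s := Set.Iio 1))).and self_mem_nhdsWithin).exists
  rw [sign_neg (sub_neg.2 hw1), sign_eq_neg_one_iff, sub_neg] at hw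
  exact ⟨w, hw0, hw1, hw⟩

/-- The exponent vectors of the monomials in `n` variables of degree at most `D` in each variable
whose total degree is at most a third of the largest possible one. -/
def lowDegreeExponents (D n : ℕ) : Finset (Fin n → ℕ) :=
  {m ∈ Fintype.piFinset fun _ ↦ range (D + 1) | 3 * ∑ i, m i ≤ D * n}

lemma exists_card_lowDegreeExponents_le_pow {D : ℕ} (hD : 0 < D) :
    ∃ c : ℝ, 0 ≤ c ∧ c < D + 1 ∧ ∀ n, (#(lowDegreeExponents D n) : ℝ) ≤ c ^ n := by
  have mean_gt : #(range (D + 1)) * D < ∑ k ∈ range (D + 1), 3 * k := by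
    have := sum_range_id_mul_two (D + 1)
    rw [← mul_sum, card_range]
    simp only [add_tsub_cancel_right] at this
    nlinarith
  obtain ⟨w, hw0, hw1, hw⟩ := exists_sum_pow_lt_card_mul_pow _ _ _ mean_gt
  refine ⟨(∑ k ∈ range (D + 1), w ^ (3 * k)) / w ^ D, by positivity, ?_, fun n ↦ ?_⟩
  · rw [div_lt_iff₀ (by positivity)]
    simpa using hw
  -- Chernoff's bound: `w ^ (3 * ∑ i, m i - D * n)` is at least `1` on the low degree exponents.
  rw [div_pow, le_div_iff₀ (by positivity), ← pow_mul]
  calc (#(lowDegreeExponents D n) : ℝ) * w ^ (D * n)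
      = ∑ _ ∈ lowDegreeExponents D n, w ^ (D * n) := by simp
    _ ≤ ∑ m ∈ lowDegreeExponents D n, ∏ i, w ^ (3 * m i) := by
        refine sum_le_sum fun m hm ↦ ?_
        rw [prod_pow_eq_pow_sum, ← mul_sum]
        exact pow_le_pow_of_le_one hw0.le hw1.le (mem_filter.1 hm).2
    _ ≤ ∑ m ∈ Fintype.piFinset fun _ : Fin n ↦ range (D + 1), ∏ i, w ^ (3 * m i) :=
        sum_le_sum_of_subset_of_nonneg (filter_subset _ _) fun _ _ _ ↦ by positivity
    _ = (∑ k ∈ range (D + 1), w ^ (3 * k)) ^ n := by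
        rw [← prod_univ_sum (fun _ ↦ range (D + 1)) fun _ k ↦ w ^ (3 * k)]
        simp

end LowDegreeExponents

section Polynomial

open MvPolynomial

lemma prod_eval_eq_sum_piFinset_support {R σ ι : Type*} [CommSemiring R] [Fintype σ] [Fintype ι]
    [DecidableEq ι] (p : MvPolynomial σ R) (x : σ → ι → R) :
    ∏ i, eval (x · i) p = ∑ f ∈ Fintype.piFinset fun _ : ι ↦ p.support,
      (∏ i, p.coeff (f i)) * ∏ j, ∏ i, x j i ^ f i j := by
  simp_rw [eval_eq', prod_univ_sum, prod_mul_distrib]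
  exact sum_congr rfl fun f _ ↦ by rw [Finset.prod_comm]

lemma exists_mem_lowDegreeExponents {R : Type*} [CommSemiring R] {p : MvPolynomial (Fin 3) R}
    {D n : ℕ} (hp : p.totalDegree ≤ D) {f : Fin n → Fin 3 →₀ ℕ} (hf : ∀ i, f i ∈ p.support) :
    ∃ j, (f · j) ∈ lowDegreeExponents D n := by
  have degree_le : ∀ i, ∑ j, f i j ≤ D := fun i ↦ by
    simpa [Finsupp.sum_fintype] using (le_totalDegree (hf i)).trans hp
  have total_le : ∑ j, ∑ i, f i j ≤ D * n := by
    rw [sum_comm]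
    simpa [mul_comm] using sum_le_sum fun i (_ : i ∈ univ) ↦ degree_le i
  obtain ⟨j, -, hj⟩ := exists_le_of_sum_le (s := (univ : Finset (Fin 3)))
    (f := fun j ↦ 3 * ∑ i, f i j) (g := fun _ ↦ D * n) univ_nonempty
    (by rw [← mul_sum]; simpa using total_le)
  refine ⟨j, mem_filter.2 ⟨Fintype.mem_piFinset.2 fun i ↦ ?_, hj⟩⟩
  exact mem_range.2 <| Nat.lt_succ_of_le <|
    (single_le_sum (fun _ _ ↦ Nat.zero_le _) (mem_univ j)).trans (degree_le i)

variable {F : Type*} [Field F] [Fintype F]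

/-- The polynomial `1 - (∑ j, bⱼ Xⱼ) ^ (q - 1)` over `F_q`, which takes the value `1` on the
hyperplane `∑ j, bⱼ xⱼ = 0` and `0` off it. -/
noncomputable def hyperplaneIndicator {σ : Type*} [Fintype σ] (b : σ → F) : MvPolynomial σ F :=
  1 - (∑ j, C (b j) * X j) ^ (Fintype.card F - 1)

variable {σ : Type*} [Fintype σ] (b : σ → F)

lemma eval_hyperplaneIndicator [DecidableEq F] (x : σ → F) :
    eval x (hyperplaneIndicator b) = if ∑ j, b j * x j = 0 then 1 else 0 := by
  have : Fintype.card F - 1 ≠ 0 := (Nat.sub_pos_of_lt Fintype.one_lt_card).ne'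
  split_ifs with h
  · simp [hyperplaneIndicator, h, this]
  · simp [hyperplaneIndicator, FiniteField.pow_card_sub_one_eq_one _ h]

lemma totalDegree_hyperplaneIndicator_le :
    (hyperplaneIndicator b).totalDegree ≤ Fintype.card F - 1 := by
  have linear_le : (∑ j, C (b j) * X j : MvPolynomial σ F).totalDegree ≤ 1 :=
    totalDegree_finsetSum_le fun j _ ↦ (totalDegree_mul _ _).trans (by simp)
  calc (hyperplaneIndicator b).totalDegree
      ≤ ((∑ j, C (b j) * X j) ^ (Fintype.card F - 1) : MvPolynomial σ F).totalDegree := by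
        simpa [hyperplaneIndicator] using totalDegree_sub (1 : MvPolynomial σ F) _
    _ ≤ (Fintype.card F - 1) * 1 := (totalDegree_pow _ _).trans (by gcongr)
    _ = Fintype.card F - 1 := mul_one _

lemma prod_eval_hyperplaneIndicator [DecidableEq F] {n : ℕ} (x : σ → Fin n → F) :
    ∏ i, eval (x · i) (hyperplaneIndicator b) = if ∑ j, b j • x j = 0 then 1 else 0 := by
  simp_rw [eval_hyperplaneIndicator, prod_ite_zero, funext_iff]
  simp

end Polynomial

section SolutionFree

variable {ι κ R V : Type*} [Fintype ι] [Fintype κ]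

/-- `A` is solution-free for the coefficients `a` if no pairwise distinct `x i ∈ A` satisfy
`∑ i, a i • x i = 0`. -/
def IsSolutionFree [Semiring R] [AddCommMonoid V] [Module R V] (a : ι → R) (A : Finset V) : Prop :=
  ∀ x : ι → V, (∀ i, x i ∈ A) → Function.Injective x → ∑ i, a i • x i ≠ 0

lemma IsSolutionFree.comp_equiv [Semiring R] [AddCommMonoid V] [Module R V] {a : ι → R}
    {A : Finset V} (hA : IsSolutionFree a A) (e : κ ≃ ι) : IsSolutionFree (a ∘ e) A := by
  intro x hx hinj hsum
  refine hA (x ∘ e.symm) (fun i ↦ hx _) (hinj.comp e.symm.injective) ?_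
  rw [← hsum, ← e.sum_comp]
  simp

lemma exists_maximal_pairwiseDisjoint {α β : Type*} [PartialOrder β] [OrderBot β] (E : Finset α)
    (f : α → β) : ∃ M ⊆ E, (M : Set α).PairwiseDisjoint f ∧
      ∀ e ∈ E, (∀ m ∈ M, Disjoint (f e) (f m)) → e ∈ M := by
  classical
  obtain ⟨M, hM⟩ := (E.powerset.filter fun M : Finset α ↦
    (M : Set α).PairwiseDisjoint f).exists_maximal ⟨∅, by simp⟩
  obtain ⟨hME, hdisj⟩ := mem_filter.1 hM.prop
  refine ⟨M, mem_powerset.1 hME, hdisj, fun e he hdisj_e ↦ ?_⟩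
  refine hM.le_of_ge (mem_filter.2 ⟨?_, ?_⟩) (subset_insert e M) (mem_insert_self e M)
  · exact mem_powerset.2 (insert_subset he (mem_powerset.1 hME))
  · rw [coe_insert]
    exact hdisj.insert fun m hm _ ↦ hdisj_e m hm

lemma exists_disjoint_solutions [Nonempty ι] [DecidableEq V] [Semiring R] [AddCommMonoid V]
    [Module R V] (a : ι → R) (A : Finset V) :
    ∃ M : Finset (ι → V),
      (∀ x ∈ M, (∀ i, x i ∈ A) ∧ Function.Injective x ∧ ∑ i, a i • x i = 0) ∧
      (∀ x ∈ M, ∀ y ∈ M, ∀ i j, x i = y j → x = y) ∧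
      IsSolutionFree a (A \ M.biUnion fun x ↦ univ.image x) := by
  classical
  let solutions : Finset (ι → V) := {x ∈ Fintype.piFinset fun _ ↦ A |
    Function.Injective x ∧ ∑ i, a i • x i = 0}
  obtain ⟨M, hM, hdisj, hmax⟩ := exists_maximal_pairwiseDisjoint solutions fun x ↦ univ.image x
  refine ⟨M, fun x hx ↦ by simpa [solutions] using hM hx, fun x hx y hy i j hij ↦
    hdisj.elim_finset hx hy (x i) (by simp) (by simp [hij]), fun x hx hinj hsum ↦ ?_⟩
  replace hx : ∀ i, x i ∈ A ∧ ∀ y ∈ M, ∀ j, y j ≠ x i := by simpa using hx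
  have hxM : x ∈ M := by
    refine hmax x (by simpa [solutions] using ⟨fun i ↦ (hx i).1, hinj, hsum⟩) fun y hy ↦ ?_
    rw [disjoint_left]
    simp only [mem_image, mem_univ, true_and, not_exists]
    rintro - ⟨i, rfl⟩ j hji
    exact (hx i).2 y hy j hji
  obtain ⟨i⟩ := ‹Nonempty ι›
  exact (hx i).2 x hxM i rfl

/- Take a maximal family `M` of disjoint solutions of `-s z + ∑ k, b k x k = 0`. In a solution of
`s z + ∑ i, a i y i = 0` among the `z`-values of `M`, replace `z` by the corresponding `x`: since
the members of `M` are disjoint, the variables stay distinct. -/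
lemma IsSolutionFree.exists_card_le_of_sumElim [Ring R] [AddCommGroup V] [Module R V]
    {b : κ → R} {a : ι → R} {A : Finset V} (hA : IsSolutionFree (Sum.elim b a) A) (s : R) :
    ∃ A₁ A₂ : Finset V, IsSolutionFree (Option.elim · (-s) b) A₁ ∧
      IsSolutionFree (Option.elim · s a) A₂ ∧ #A ≤ #A₁ + #A₂ * (Fintype.card κ + 1) := by
  classical
  obtain ⟨M, hM, eq_of_common_value, hfree⟩ :=
    exists_disjoint_solutions (fun o : Option κ ↦ o.elim (-s) b) A
  refine ⟨_, M.image (· none), hfree, fun y hy hinj hsum ↦ ?_, ?_⟩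
  · choose m hm hmy using fun o ↦ mem_image.1 (hy o)
    have sum_eq : ∑ k, b k • m none (some k) = s • y none := by
      have := (hM _ (hm none)).2.2
      rw [Fintype.sum_option, Option.elim_none, neg_smul, neg_add_eq_zero, hmy] at this
      exact this.symm
    refine hA (Sum.elim (fun k ↦ m none (some k)) fun i ↦ y (some i)) ?_ ?_ ?_
    · rintro (k | i)
      · exact (hM _ (hm none)).1 _
      · rw [Sum.elim_inr, ← hmy]
        exact (hM _ (hm (some i))).1 none
    · refine Function.Injective.sumElim ((hM _ (hm none)).2.1.comp (Option.some_injective κ))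
        (hinj.comp (Option.some_injective ι)) fun k i hki ↦ ?_
      have : m none = m (some i) :=
        eq_of_common_value _ (hm none) _ (hm (some i)) (some k) none (hki.trans (hmy (some i)).symm)
      exact Option.some_ne_none i (hinj (by rw [← hmy, ← hmy none, this]))
    · simpa [Fintype.sum_option, sum_eq] using hsum
  · have card_image : #(M.image (· none)) = #M :=
      card_image_of_injOn fun x hx y hy h ↦ eq_of_common_value x hx y hy none none h
    have card_biUnion : #(M.biUnion fun x ↦ univ.image x) ≤ #M * (Fintype.card κ + 1) :=
      card_biUnion_le_card_mul _ _ _ fun x _ ↦ card_image_le.trans (by simp)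
    rw [card_image]
    exact card_le_card_sdiff_add_card.trans (Nat.add_le_add_left card_biUnion _)

lemma eq_of_sum_smul_eq_zero {K : Type*} [Field K] [AddCommGroup V] [Module K V] {b : ι → K}
    (hb : ∑ i, b i = 0) {x : ι → V} (hx : ∑ i, b i • x i = 0) {k : ι} (hk : b k ≠ 0) {v : V}
    (hv : ∀ i ≠ k, x i = v) : x k = v := by
  have : b k • (x k - v) = 0 := by
    rw [← Fintype.sum_eq_single (f := fun i ↦ b i • (x i - v)) k fun i hi ↦ by simp [hv i hi]]
    simp_rw [smul_sub, sum_sub_distrib, hx, ← sum_smul, hb, zero_smul, sub_zero]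
  exact sub_eq_zero.1 ((smul_eq_zero.1 this).resolve_left hk)

lemma IsSolutionFree.sum_smul_eq_zero_iff {K : Type*} [Field K] [AddCommGroup V] [Module K V]
    {b : Fin 3 → K} (hb : ∀ j, b j ≠ 0) (hsum : ∑ j, b j = 0) {A : Finset V}
    (hA : IsSolutionFree b A) {x y z : V} (hx : x ∈ A) (hy : y ∈ A) (hz : z ∈ A) :
    ∑ j, b j • ![x, y, z] j = 0 ↔ x = y ∧ y = z := by
  constructor
  · intro h
    have not_injective : ¬Function.Injective ![x, y, z] :=
      fun hinj ↦ hA _ (by simp [Fin.forall_fin_succ, hx, hy, hz]) hinj h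
    have heq : x = y ∨ x = z ∨ y = z := by
      contrapose! not_injective
      simp [Function.Injective, Fin.forall_fin_succ, not_injective, not_injective.1.symm,
        not_injective.2.1.symm, not_injective.2.2.symm]
    rcases heq with rfl | rfl | rfl
    · have := eq_of_sum_smul_eq_zero hsum h (hb 2) (v := x) (by simp [Fin.forall_fin_succ])
      exact ⟨rfl, this.symm⟩
    · have := eq_of_sum_smul_eq_zero hsum h (hb 1) (v := x) (by simp [Fin.forall_fin_succ])
      exact ⟨this.symm, this⟩
    · have := eq_of_sum_smul_eq_zero hsum h (hb 0) (v := y) (by simp [Fin.forall_fin_succ])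
      exact ⟨this, rfl⟩
  · rintro ⟨rfl, rfl⟩
    have : ∀ j, ![x, x, x] j = x := by simp [Fin.forall_fin_succ]
    simp_rw [this, ← sum_smul, hsum, zero_smul]

lemma exists_add_eq_add_of_two_mul_card_lt {G : Type*} [AddCommGroup G] [Fintype G]
    {A : Finset G} (hA : 2 * Fintype.card G < #A * #A - #A) :
    ∃ x : Fin 4 → G, (∀ i, x i ∈ A) ∧ Function.Injective x ∧ x 0 + x 1 = x 2 + x 3 := by
  classical
  obtain ⟨s, -, hs⟩ := exists_lt_card_fiber_of_mul_lt_card_of_maps_to (s := A.offDiag)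
    (t := univ) (f := fun p ↦ p.1 + p.2) (n := 2) (fun _ _ ↦ mem_univ _)
    (by rwa [offDiag_card, card_univ, mul_comm])
  obtain ⟨⟨x, y⟩, hxy⟩ := card_pos.1 (zero_lt_two.trans hs)
  obtain ⟨⟨x', y'⟩, hx'y', hne⟩ := exists_mem_notMem_of_card_lt_card
    ((card_le_two (a := (x, y)) (b := (y, x))).trans_lt hs)
  obtain ⟨⟨hx, hy, hxy⟩, rfl⟩ : (x ∈ A ∧ y ∈ A ∧ x ≠ y) ∧ x + y = s := by simpa using hxy
  obtain ⟨⟨hx', hy', hx'y'⟩, hsum⟩ : (x' ∈ A ∧ y' ∈ A ∧ x' ≠ y') ∧ x' + y' = x + y := by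
    simpa using hx'y'
  have hxx' : x ≠ x' := by
    rintro rfl
    simp [add_left_cancel hsum] at hne
  have hxy' : x ≠ y' := by
    rintro rfl
    simp [add_right_cancel (hsum.trans (add_comm x y))] at hne
  have hyx' : y ≠ x' := by
    rintro rfl
    simp [add_left_cancel (hsum.trans (add_comm x y))] at hne
  have hyy' : y ≠ y' := by
    rintro rfl
    simp [add_right_cancel hsum] at hne
  refine ⟨![x, y, x', y'], ?_, ?_, hsum.symm⟩
  · simp [Fin.forall_fin_succ, hx, hy, hx', hy']
  · simp [Function.Injective, Fin.forall_fin_succ, *, Ne.symm]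

end SolutionFree

section ExponentialBound

variable {ι κ F : Type*} [Fintype ι] [Fintype κ] [Field F] [Fintype F]

/- The indicator function of the hyperplane `∑ j, b j x j = 0` is a polynomial of degree at most
`q - 1`, so its product over the coordinates is a sum of products of three monomials one of which
has low degree. As `A` is solution-free, this product is the diagonal tensor on `A`. -/
lemma IsSolutionFree.card_le_three_mul_card_lowDegreeExponents {b : Fin 3 → F}
    (hb : ∀ j, b j ≠ 0) (hsum : ∑ j, b j = 0) {n : ℕ} {A : Finset (Fin n → F)}
    (hA : IsSolutionFree b A) : #A ≤ 3 * #(lowDegreeExponents (Fintype.card F - 1) n) := by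
  classical
  let p := hyperplaneIndicator b
  let monomialOn (m : Fin n → ℕ) : A → F := fun x ↦ ∏ i, x.1 i ^ m i
  let U := Submodule.span F
    ((lowDegreeExponents (Fintype.card F - 1) n).image monomialOn : Set (A → F))
  have mem_U {m} (hm : m ∈ lowDegreeExponents (Fintype.card F - 1) n) : monomialOn m ∈ U :=
    Submodule.subset_span (mem_image_of_mem monomialOn hm)
  have finrank_U : finrank F U ≤ #(lowDegreeExponents (Fintype.card F - 1) n) :=
    (finrank_span_finset_le_card _).trans card_image_le
  have card_A_le := card_le_finrank_add_of_sum_mul_eq_diagonal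
    (Fintype.piFinset fun _ : Fin n ↦ p.support) U U U
    (fun f ↦ (∏ i, p.coeff (f i)) • monomialOn (f · 0)) (fun f ↦ monomialOn (f · 1))
    (fun f ↦ monomialOn (f · 2)) (fun f hf ↦ ?_) fun x y z ↦ ?_
  · rw [Fintype.card_coe] at card_A_le
    omega
  · obtain ⟨j, hj⟩ := exists_mem_lowDegreeExponents (totalDegree_hyperplaneIndicator_le b)
      (Fintype.mem_piFinset.1 hf)
    fin_cases j
    · exact Or.inl (U.smul_mem _ (mem_U hj))
    · exact Or.inr (Or.inl (mem_U hj))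
    · exact Or.inr (Or.inr (mem_U hj))
  · calc _ = ∏ i, MvPolynomial.eval (![x.1, y.1, z.1] · i) p := by
          rw [prod_eval_eq_sum_piFinset_support]
          simp [p, monomialOn, Fin.prod_univ_three, mul_assoc]
      _ = _ := by
          rw [prod_eval_hyperplaneIndicator]
          simp only [hA.sum_smul_eq_zero_iff hb hsum x.2 y.2 z.2, Subtype.ext_iff]

lemma IsSolutionFree.card_mul_card_sub_card_le {R V : Type*} [Ring R] [AddCommGroup V] [Module R V]
    [Fintype V] {r : R} (hr : r + r = 0) {A : Finset V}
    (hA : IsSolutionFree (fun _ : Fin 4 ↦ r) A) : #A * #A - #A ≤ 2 * Fintype.card V := by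
  by_contra! hlt
  obtain ⟨x, hx, hinj, hadd⟩ := exists_add_eq_add_of_two_mul_card_lt hlt
  refine hA x hx hinj ?_
  rw [← smul_sum, Fin.sum_univ_four, hadd, add_assoc, smul_add, ← add_smul, hr, zero_smul]

/-- The solution-free sets in `F_q ^ n` for the coefficients `a` are exponentially small: their size
is at most `C * c ^ n` for some constants `C` and `c < q`. -/
def HasExpBound (a : ι → F) : Prop :=
  ∃ (C : ℕ) (c : ℝ), 0 ≤ c ∧ c < Fintype.card F ∧
    ∀ (n : ℕ) (A : Finset (Fin n → F)), IsSolutionFree a A → (#A : ℝ) ≤ C * c ^ n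

lemma HasExpBound.of_comp_equiv {a : ι → F} (e : κ ≃ ι) (h : HasExpBound (a ∘ e)) :
    HasExpBound a := by
  obtain ⟨C, c, hc0, hc, hbound⟩ := h
  exact ⟨C, c, hc0, hc, fun n A hA ↦ hbound n A (hA.comp_equiv e)⟩

lemma HasExpBound.of_option_elim {b : κ → F} {a : ι → F} (s : F)
    (hb : HasExpBound (Option.elim · (-s) b)) (ha : HasExpBound (Option.elim · s a)) :
    HasExpBound (Sum.elim b a) := by
  obtain ⟨C₁, c₁, hc₁0, hc₁, hbound₁⟩ := hb
  obtain ⟨C₂, c₂, hc₂0, hc₂, hbound₂⟩ := ha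
  refine ⟨C₁ + C₂ * (Fintype.card κ + 1), max c₁ c₂, le_max_of_le_left hc₁0, max_lt hc₁ hc₂,
    fun n A hA ↦ ?_⟩
  obtain ⟨A₁, A₂, hA₁, hA₂, hcard⟩ := hA.exists_card_le_of_sumElim s
  calc (#A : ℝ) ≤ #A₁ + #A₂ * (Fintype.card κ + 1) := by exact_mod_cast hcard
    _ ≤ C₁ * c₁ ^ n + C₂ * c₂ ^ n * (Fintype.card κ + 1) := by
        gcongr
        exacts [hbound₁ n A₁ hA₁, hbound₂ n A₂ hA₂]
    _ ≤ C₁ * max c₁ c₂ ^ n + C₂ * max c₁ c₂ ^ n * (Fintype.card κ + 1) := by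
        gcongr
        exacts [le_max_left _ _, le_max_right _ _]
    _ = (C₁ + C₂ * (Fintype.card κ + 1) : ℕ) * max c₁ c₂ ^ n := by
        push_cast
        ring

lemma HasExpBound.of_finset [DecidableEq ι] {a : ι → F} (S : Finset ι) (s : F)
    (h : HasExpBound fun o : Option S ↦ o.elim (-s) (a ·))
    (h' : HasExpBound fun o : Option {i // i ∉ S} ↦ o.elim s (a ·)) : HasExpBound a := by
  refine .of_comp_equiv (Equiv.sumCompl (· ∈ S)) ?_
  convert HasExpBound.of_option_elim s h h' using 1
  ext (i | i) <;> rfl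

lemma hasExpBound_of_card_eq_three (hι : Fintype.card ι = 3) {a : ι → F} (ha : ∀ i, a i ≠ 0)
    (hsum : ∑ i, a i = 0) : HasExpBound a := by
  have hD : 0 < Fintype.card F - 1 := Nat.sub_pos_of_lt Fintype.one_lt_card
  obtain ⟨c, hc0, hc, hcard⟩ := exists_card_lowDegreeExponents_le_pow hD
  let e : Fin 3 ≃ ι := (Fintype.equivFinOfCardEq hι).symm
  refine .of_comp_equiv e ⟨3, c, hc0, ?_, fun n A hA ↦ ?_⟩
  · rwa [Nat.cast_pred Fintype.card_pos, sub_add_cancel] at hc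
  · calc (#A : ℝ) ≤ (3 : ℕ) * #(lowDegreeExponents (Fintype.card F - 1) n) := by
          exact_mod_cast hA.card_le_three_mul_card_lowDegreeExponents (fun _ ↦ ha _)
            ((e.sum_comp a).trans hsum)
      _ ≤ (3 : ℕ) * c ^ n := by
          gcongr
          exact hcard n

lemma hasExpBound_const_of_card_eq_four (hι : Fintype.card ι = 4) {r : F} (hr : r + r = 0) :
    HasExpBound fun _ : ι ↦ r := by
  have one_lt_card : (1 : ℝ) < Fintype.card F := mod_cast Fintype.one_lt_card
  refine .of_comp_equiv (Fintype.equivFinOfCardEq hι).symm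
    ⟨3, √(Fintype.card F), by positivity, ?_, fun n A hA ↦ ?_⟩
  · rw [Real.sqrt_lt' (by positivity)]
    nlinarith
  · have one_le_pow : 1 ≤ √(Fintype.card F) ^ n :=
      one_le_pow₀ (Real.one_le_sqrt.2 one_lt_card.le)
    have card_le : (#A : ℝ) * #A ≤ 2 * (√(Fintype.card F) ^ n) ^ 2 + #A := by
      have := hA.card_mul_card_sub_card_le hr
      rw [tsub_le_iff_right, Fintype.card_fun, Fintype.card_fin] at this
      rw [pow_right_comm, Real.sq_sqrt (Nat.cast_nonneg _)]
      exact_mod_cast this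
    push_cast
    nlinarith

lemma exists_forall_eq_of_forall_add_eq_zero {G : Type*} [AddCommGroup G]
    (hι : 2 < Fintype.card ι) {a : ι → G} (h : ∀ i j, i ≠ j → a i + a j = 0) :
    ∃ r, r + r = 0 ∧ ∀ i, a i = r := by
  obtain ⟨i, j, k, hij, hik, hjk⟩ := Fintype.two_lt_card_iff.1 hι
  have double_eq_zero : a i + a i = 0 := by
    calc a i + a i = (a i + a j) + (a i + a k) - (a j + a k) := by abel
      _ = 0 := by simp [h, hij, hik, hjk]
  refine ⟨a i, double_eq_zero, fun l ↦ ?_⟩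
  by_cases hl : l = i
  · rw [hl]
  · exact add_right_cancel ((h l i hl).trans double_eq_zero.symm)

lemma hasExpBound_option_elim_of_card_eq_two {α : Type*} {S : Finset α} (hS : #S = 2) {a : α → F}
    (ha : ∀ i ∈ S, a i ≠ 0) (hsum : ∑ i ∈ S, a i ≠ 0) :
    HasExpBound fun o : Option S ↦ o.elim (-∑ i ∈ S, a i) (a ·) := by
  refine hasExpBound_of_card_eq_three (by simp [hS])
    (Option.forall.2 ⟨neg_ne_zero.2 hsum, fun i ↦ ha i i.2⟩) ?_
  rw [Fintype.sum_option, Option.elim_none, ← sum_coe_sort]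
  exact neg_add_cancel _

lemma sum_const_eq_self_of_card_eq_three {α G : Type*} [AddCommMonoid G] {S : Finset α}
    (hS : #S = 3) {r : G} (hr : r + r = 0) : ∑ _ ∈ S, r = r := by
  rw [sum_const, hS, succ_nsmul, two_nsmul, hr, zero_add]

lemma hasExpBound_option_elim_const_of_card_eq_three {α : Type*} {S : Finset α} (hS : #S = 3)
    {r : F} (hr : r + r = 0) :
    HasExpBound fun o : Option S ↦ o.elim (-∑ _ ∈ S, r) fun _ ↦ r := by
  have neg_sum_eq : -∑ _ ∈ S, r = r := by
    rw [sum_const_eq_self_of_card_eq_three hS hr, neg_eq_of_add_eq_zero_left hr]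
  convert hasExpBound_const_of_card_eq_four (ι := Option S) (by simp [hS]) hr using 1
  ext (_ | _)
  exacts [neg_sum_eq, rfl]

theorem hasExpBound (hι : 3 ≤ Fintype.card ι) {a : ι → F} (ha : ∀ i, a i ≠ 0)
    (hsum : ∑ i, a i = 0) : HasExpBound a := by
  classical
  induction hm : Fintype.card ι using Nat.strong_induction_on generalizing ι with | _ m ih
  have split (S : Finset ι) (two_le : 2 ≤ #S) (add_two_le : #S + 2 ≤ m) (hS : ∑ i ∈ S, a i ≠ 0)
      (h : HasExpBound fun o : Option S ↦ o.elim (-∑ i ∈ S, a i) (a ·)) : HasExpBound a := by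
    have card_option_compl : Fintype.card (Option {i // i ∉ S}) = m - #S + 1 := by
      rw [Fintype.card_option, Fintype.card_subtype_compl, Fintype.card_coe, hm]
    refine h.of_finset S _ (ih _ (by omega) (by omega) (Option.forall.2 ⟨hS, fun i ↦ ha i⟩) ?_
      card_option_compl)
    rw [Fintype.sum_option, Option.elim_none, ← sum_coe_sort, ← hsum,
      ← Fintype.sum_subtype_add_sum_subtype (· ∈ S) a]
    congr!
  rcases hι.eq_or_lt' with hι | hι
  · exact hasExpBound_of_card_eq_three hι ha hsum
  by_cases hpair : ∃ i j, i ≠ j ∧ a i + a j ≠ 0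
  · obtain ⟨i, j, hij, hadd⟩ := hpair
    have card_pair := card_pair hij
    rw [← sum_pair hij] at hadd
    exact split {i, j} card_pair.ge (by omega) hadd
      (hasExpBound_option_elim_of_card_eq_two card_pair (fun i _ ↦ ha i) hadd)
  push Not at hpair
  obtain ⟨r, hr, har⟩ := exists_forall_eq_of_forall_add_eq_zero hι.le hpair
  obtain rfl : a = fun _ ↦ r := funext har
  rcases (Nat.succ_le_of_lt hι).eq_or_lt' with hι | hι
  · exact hasExpBound_const_of_card_eq_four hι hr
  obtain ⟨S, -, card_S⟩ := exists_subset_card_eq (s := (univ : Finset ι)) (n := 3) ‹_›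
  obtain ⟨i, -⟩ : S.Nonempty := card_pos.1 (by omega)
  exact split S (by omega) (by omega)
    ((sum_const_eq_self_of_card_eq_three card_S hr).trans_ne (ha i))
    (hasExpBound_option_elim_const_of_card_eq_three card_S hr)

end ExponentialBound

theorem multivariable_EG_general {ι F : Type*} [Fintype ι] [Field F] [Fintype F]
    (hι : 3 ≤ Fintype.card ι) (a : ι → F) (ha : ∀ i, a i ≠ 0) (hsum : ∑ i, a i = 0) :
    ∃ cq : ℝ, cq < Fintype.card F ∧ ∃ N : ℕ, ∀ n : ℕ, N ≤ n →
      ∀ A : Set (Fin n → F), cq ^ n < (A.ncard : ℝ) →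
        ∃ x : ι → (Fin n → F), (∀ i, x i ∈ A) ∧ Function.Injective x ∧ ∑ i, a i • x i = 0 := by
  classical
  obtain ⟨C, c, hc0, hc, hbound⟩ := hasExpBound hι ha hsum
  obtain ⟨cq, hccq, hcq⟩ := exists_between hc
  have eventually_le : ∀ᶠ n : ℕ in atTop, C * c ^ n ≤ cq ^ n := by
    have isLittleO := (isLittleO_pow_pow_of_lt_left hc0 hccq).const_mul_left (C : ℝ)
    filter_upwards [isLittleO.eventuallyLE] with n hn
    simpa [abs_of_nonneg, hc0, hc0.trans hccq.le] using hn
  obtain ⟨N, hN⟩ := eventually_atTop.1 eventually_le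
  refine ⟨cq, hcq, N, fun n hn A hA ↦ ?_⟩
  by_contra! hfree
  have hA' : IsSolutionFree a A.toFinset := fun x hx ↦ hfree x fun i ↦ Set.mem_toFinset.1 (hx i)
  rw [Set.ncard_eq_toFinset_card'] at hA
  exact hA.not_ge ((hbound n _ hA').trans (hN n hn))

/-- **Theorem (multivariable Ellenberg–Gijswijt).**
Let `d ≥ 4` and `a_1, …, a_d ∈ F_q \ {0}` with `a_1 + ⋯ + a_d = 0`. There exists
`c_q < q` such that for all sufficiently large `n`, every `A ⊆ F_q^n` with
`|A| > c_q^n` contains pairwise distinct `x_1, …, x_d` with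
`a_1 x_1 + ⋯ + a_d x_d = 0`. -/
theorem multivariable_EG {F : Type*} [Field F] [Fintype F] {d : ℕ} (hd : 4 ≤ d)
    (a : Fin d → F) (ha : ∀ i, a i ≠ 0) (hsum : ∑ i, a i = 0) :
    ∃ cq : ℝ, cq < (Fintype.card F : ℝ) ∧ ∃ N : ℕ, ∀ n : ℕ, N ≤ n →
      ∀ A : Set (Fin n → F), cq ^ n < (A.ncard : ℝ) →
        ∃ x : Fin d → (Fin n → F), (∀ i, x i ∈ A) ∧ Function.Injective x ∧
          ∑ i, a i • x i = 0 :=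
  multivariable_EG_general (by rw [Fintype.card_fin]; omega) a ha hsum
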